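/- Let ⊢ be an entailment relation on a set S and let Φ be a collection of finite subsets of S each of which is inconsistent (i.e. Φ(X) implies X ⊢ ∅). Then the following are equivalent: (1) Φ contains every inconsistent finite subset of S, i.e. X ⊢ ∅ implies Φ(X); (2) for all finite subsets {x₁,…,x_k}, {y₁,…,y_ℓ} and Z of S, if {x₁,…,x_k} ⊢ {y₁,…,y_ℓ} and Φ({y_j} ∪ Z) holds for every j = 1,…,ℓ, then Φ({x₁,…,x_k} ∪ Z) holds. -/

import Mathlib

/-- An entailment relation on a set `S`: a relation between finite subsets of `S`
satisfying reflexivity (R), monotonicity (M) and transitivity/cut (T). -/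
def IsEntailment {S : Type*} [DecidableEq S] (E : Finset S → Finset S → Prop) : Prop :=
  (∀ X Y : Finset S, (∃ x, x ∈ X ∧ x ∈ Y) → E X Y) ∧
  (∀ X X' Y Y' : Finset S, E X Y → E (X ∪ X') (Y ∪ Y')) ∧
  (∀ X Y : Finset S, ∀ z : S, E X (insert z Y) → E (insert z X) Y → E X Y)

/-!
If `X ⊢ Y` and each `y ∈ Y` is inconsistent together with `Z`, then cutting the elements of `Y`
one after the other shows that `X ∪ Z` is inconsistent. Thus the inconsistent sets satisfy the
closure property (2); conversely, (2) with `Y = Z = ∅` is exactly (1).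
-/

section Cut

variable {S : Type*} [DecidableEq S] {E : Finset S → Finset S → Prop} {X X' Y Y' Z W : Finset S}

/-- Monotonicity (M) of a relation between finite sets, in the form used by `IsEntailment`. -/
def HasWeakening (E : Finset S → Finset S → Prop) : Prop :=
  ∀ X X' Y Y' : Finset S, E X Y → E (X ∪ X') (Y ∪ Y')

/-- The cut rule (T) for a relation between finite sets, in the form used by `IsEntailment`: both
premises share the context `X`, `Y`. -/
def HasCut (E : Finset S → Finset S → Prop) : Prop :=
  ∀ X Y : Finset S, ∀ z : S, E X (insert z Y) → E (insert z X) Y → E X Y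

theorem HasWeakening.mono (hM : HasWeakening E) (hXY : E X Y) (hX : X ⊆ X') (hY : Y ⊆ Y') :
    E X' Y' := by
  simpa only [Finset.union_eq_right.mpr hX, Finset.union_eq_right.mpr hY] using hM X X' Y Y' hXY

theorem HasCut.of_forall_insert (hT : HasCut E) (hM : HasWeakening E) (hXYW : E X (Y ∪ W))
    (hY : ∀ y ∈ Y, E (insert y X) W) : E X W := by
  induction Y using Finset.induction_on with
  | empty => simpa only [Finset.empty_union] using hXYW
  | insert y Y _ ih =>
    rw [Finset.forall_mem_insert] at hY
    rw [Finset.insert_union] at hXYW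
    have hyX : E (insert y X) (Y ∪ W) := hM.mono hY.1 subset_rfl Finset.subset_union_right
    exact ih (hT X (Y ∪ W) y hXYW hyX) hY.2

theorem HasCut.union_of_forall_insert (hT : HasCut E) (hM : HasWeakening E) (hXYW : E X (Y ∪ W))
    (hY : ∀ y ∈ Y, E (insert y Z) W) : E (X ∪ Z) W := by
  refine hT.of_forall_insert hM (hM.mono hXYW Finset.subset_union_left subset_rfl) fun y hy ↦ ?_
  exact hM.mono (hY y hy) (Finset.insert_subset_insert y Finset.subset_union_right) subset_rfl

end Cut

theorem stmt0_general {S : Type*} [DecidableEq S] {E : Finset S → Finset S → Prop}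
    (hM : HasWeakening E) (hT : HasCut E) {Φ : Finset S → Prop}
    (hΦ : ∀ X : Finset S, Φ X → E X ∅) :
    (∀ X : Finset S, E X ∅ → Φ X) ↔
      (∀ X Y Z : Finset S, E X Y → (∀ y ∈ Y, Φ (insert y Z)) → Φ (X ∪ Z)) := by
  constructor
  · intro hall X Y Z hXY hY
    have hXY' : E X (Y ∪ ∅) := by rwa [Finset.union_empty]
    exact hall _ (hT.union_of_forall_insert hM hXY' fun y hy ↦ hΦ _ (hY y hy))
  · intro hclosed X hX
    simpa using hclosed X ∅ ∅ hX

theorem stmt0 {S : Type*} [DecidableEq S] (E : Finset S → Finset S → Prop)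
    (hE : IsEntailment E) (Φ : Finset S → Prop)
    (hΦ : ∀ X : Finset S, Φ X → E X ∅) :
    (∀ X : Finset S, E X ∅ → Φ X) ↔
      (∀ X Y Z : Finset S, E X Y → (∀ y ∈ Y, Φ (insert y Z)) → Φ (X ∪ Z)) :=
  stmt0_general hE.2.1 hE.2.2 hΦ
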